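/- Let C be a connected filtered k-coalgebra with filtration (C_{≤0}, C_{≤1}, C_{≤2}, …) and unity 1_C. Let f : C → C be a k-coalgebra homomorphism such that f(1_C) = 1_C and Prim C ⊆ Ker(id − f). Then: (a) for any integer u > 1, we have (id − f)^{u−1}(C_{≤u}) ⊆ Prim C; (b) for any positive integer u, we have (id − f)^{u}(C_{≤u}) = 0. Here powers denote composition powers. -/

import Mathlib

/-!
Put `g = 1 - f` and `T = 1 - f ⊗ f = g ⊗ 1 + f ⊗ g`. Since `f` is a coalgebra map,
`Δ ∘ g ^ n = T ^ n ∘ Δ`, and since `f` fixes `1_C`, `T ^ n` acts on `C ⊗ 1_C` and `1_C ⊗ C`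
as `g ^ n` on the other factor.

Connectedness gives `F 0 = k · 1_C`, so for `x ∈ F u` one has
`Δ x = a ⊗ 1_C + 1_C ⊗ b + r` with `r ∈ ∑_{0 < i < u} F i ⊗ F (u - i)` (`exists_comul_decomp`).
Expanding `T ^ (u - 1)` by the binomial theorem, the term with `g ^ m` on the left and
`g ^ (u - 1 - m)` on the right kills `F i ⊗ F (u - i)`, because `m ≥ i` or `u - 1 - m ≥ u - i` and
`g ^ j` kills `F j` for `0 < j < u` by strong induction (`one_sub_map_pow_tmul_eq_zero`). Hence
`Δ (g ^ (u - 1) x) = g ^ (u - 1) a ⊗ 1_C + 1_C ⊗ g ^ (u - 1) b`. As `ε ∘ g = 0`, for `u > 1` the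
counit axioms identify both `g ^ (u - 1) a` and `g ^ (u - 1) b` with `g ^ (u - 1) x`, which is
therefore primitive and so killed by `g`. For `u = 1` the decomposition shows directly that
`x - ε(x) 1_C` is primitive.
-/

open TensorProduct

/-- The image of `A ⊗ B` under the canonical map `A ⊗ B → C ⊗ C` obtained by tensoring
the inclusion maps. -/
noncomputable def tmulImage {k C : Type*} [CommRing k] [AddCommGroup C] [Module k C]
    (A B : Submodule k C) : Submodule k (C ⊗[k] C) :=
  LinearMap.range (TensorProduct.mapIncl A B)

/-- The submodule of primitive elements of `C` (with respect to the unity `one`):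
those `x` with `Δ x = x ⊗ one + one ⊗ x`. -/
noncomputable def primitives (k : Type*) (C : Type*) [CommRing k] [AddCommGroup C]
    [Module k C] [Coalgebra k C] (one : C) : Submodule k C :=
  LinearMap.ker (Coalgebra.comul (R := k) - (TensorProduct.mk k C C).flip one
    - TensorProduct.mk k C C one)

theorem mem_primitives_iff {k C : Type*} [CommRing k] [AddCommGroup C] [Module k C]
    [Coalgebra k C] {one x : C} :
    x ∈ primitives k C one ↔
      Coalgebra.comul (R := k) x = x ⊗ₜ[k] one + one ⊗ₜ[k] x := by
  simp [primitives, sub_sub, sub_eq_zero]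

theorem tmulImage_le {k C : Type*} [CommRing k] [AddCommGroup C] [Module k C]
    {A B : Submodule k C} {N : Submodule k (C ⊗[k] C)}
    (h : ∀ p ∈ A, ∀ q ∈ B, p ⊗ₜ[k] q ∈ N) : tmulImage A B ≤ N := by
  rintro _ ⟨t, rfl⟩
  induction t with
  | zero => simp
  | tmul p q => simpa [TensorProduct.mapIncl] using h p p.2 q q.2
  | add s t hs ht => rw [map_add]; exact N.add_mem hs ht

/-- The `1_C`-parts of `Δ x` for `x ∈ F u` split off, up to any submodule `N` containing the
middle terms `F i ⊗ F (u - i)`, `0 < i < u`. -/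
theorem exists_comul_decomp {k C : Type*} [CommRing k] [AddCommGroup C] [Module k C]
    [Coalgebra k C] (F : ℕ → Submodule k C) (oneC : C)
    (hF0 : ∀ x ∈ F 0, ∃ c : k, x = c • oneC)
    (hcomulF : ∀ n : ℕ, Submodule.map (Coalgebra.comul (R := k) (A := C)) (F n) ≤
      ∑ i ∈ Finset.range (n + 1), tmulImage (F i) (F (n - i)))
    (u : ℕ) (N : Submodule k (C ⊗[k] C))
    (hN : ∀ i, 0 < i → i < u → tmulImage (F i) (F (u - i)) ≤ N) (x : C) (hx : x ∈ F u) :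
    ∃ a b : C, ∃ r ∈ N,
      Coalgebra.comul (R := k) x = a ⊗ₜ[k] oneC + oneC ⊗ₜ[k] b + r := by
  have hle : ∑ i ∈ Finset.range (u + 1), tmulImage (F i) (F (u - i)) ≤
      LinearMap.range ((TensorProduct.mk k C C).flip oneC) ⊔
        LinearMap.range (TensorProduct.mk k C C oneC) ⊔ N := by
    refine Finset.sum_induction _ (fun M => M ≤ _) (fun _ _ h₁ h₂ => sup_le h₁ h₂) bot_le ?_
    intro i hi
    rw [Finset.mem_range] at hi
    rcases Nat.eq_zero_or_pos i with rfl | hpos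
    · refine le_trans (tmulImage_le ?_) (le_sup_right.trans le_sup_left)
      intro p hp q _
      obtain ⟨c, rfl⟩ := hF0 p hp
      exact ⟨c • q, by simp [TensorProduct.smul_tmul]⟩
    rcases Nat.lt_or_ge i u with hlt | hge
    · exact (hN i hpos hlt).trans le_sup_right
    · obtain rfl : i = u := by omega
      refine le_trans (tmulImage_le ?_) (le_sup_left.trans le_sup_left)
      intro p _ q hq
      rw [Nat.sub_self] at hq
      obtain ⟨c, rfl⟩ := hF0 q hq
      exact ⟨c • p, by simp [TensorProduct.smul_tmul]⟩
  have hmem := hle (hcomulF u ⟨x, hx, rfl⟩)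
  obtain ⟨y, hy, r, hr, hyr⟩ := Submodule.mem_sup.1 hmem
  obtain ⟨_, ⟨a, rfl⟩, _, ⟨b, rfl⟩, rfl⟩ := Submodule.mem_sup.1 hy
  exact ⟨a, b, r, hr, hyr.symm⟩

/-- If `g = 1 - f` satisfies `g ^ i p = 0` and `g ^ j q = 0`, then `(1 - f ⊗ f) ^ n` kills `p ⊗ q`
as soon as `i + j ≤ n + 1`: every binomial term of `(g ⊗ 1 + f ⊗ g) ^ n` does. -/
theorem one_sub_map_pow_tmul_eq_zero {k C : Type*} [CommRing k] [AddCommGroup C] [Module k C]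
    (f : Module.End k C) {i j n : ℕ} (hij : i + j ≤ n + 1) {p q : C}
    (hp : ((1 - f) ^ i) p = 0) (hq : ((1 - f) ^ j) q = 0) :
    (((1 : Module.End k (C ⊗[k] C)) - TensorProduct.map f f) ^ n) (p ⊗ₜ[k] q) = 0 := by
  set g : Module.End k C := 1 - f with hg
  have hfg : Commute f g := (Commute.one_right f).sub_right (Commute.refl f)
  have hT : (1 : Module.End k (C ⊗[k] C)) - TensorProduct.map f f =
      TensorProduct.map f g + TensorProduct.map g 1 := by
    refine TensorProduct.ext' fun x y => ?_
    simp [hg, TensorProduct.sub_tmul, TensorProduct.tmul_sub]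
  have hcomm : Commute (TensorProduct.map f g : Module.End k (C ⊗[k] C))
      (TensorProduct.map g 1) := by
    change _ * _ = _ * _
    rw [← TensorProduct.map_mul, ← TensorProduct.map_mul, hfg.eq, mul_one, one_mul]
  have hkill : ∀ {l m : ℕ} {z : C}, l ≤ m → (g ^ l) z = 0 → (g ^ m) z = 0 := by
    intro l m z hlm hz
    rw [← Nat.sub_add_cancel hlm, pow_add, Module.End.mul_apply, hz, map_zero]
  rw [hT, hcomm.add_pow, LinearMap.sum_apply]
  refine Finset.sum_eq_zero fun m hm => ?_
  rw [Finset.mem_range] at hm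
  have hzero : ((TensorProduct.map f g : Module.End k (C ⊗[k] C)) ^ m *
      (TensorProduct.map g 1 : Module.End k (C ⊗[k] C)) ^ (n - m)) (p ⊗ₜ[k] q) = 0 := by
    rw [TensorProduct.map_pow, TensorProduct.map_pow, Module.End.mul_apply,
      TensorProduct.map_tmul, TensorProduct.map_tmul, one_pow, Module.End.one_apply]
    rcases Nat.lt_or_ge m j with h | h
    · rw [hkill (show i ≤ n - m by omega) hp, map_zero, TensorProduct.zero_tmul]
    · rw [hkill h hq, TensorProduct.tmul_zero]
  rw [← (Nat.cast_commute _ _).eq, Module.End.mul_apply, hzero, map_zero]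

theorem stmt_14 {k C : Type*} [CommRing k] [AddCommGroup C] [Module k C] [Coalgebra k C]
    (F : ℕ → Submodule k C)
    (hmono : Monotone F)
    (hunion : ∀ x : C, ∃ n, x ∈ F n)
    (hcomulF : ∀ n : ℕ, Submodule.map (Coalgebra.comul (R := k) (A := C)) (F n) ≤
      ∑ i ∈ Finset.range (n + 1), tmulImage (F i) (F (n - i)))
    (hconn : Function.Bijective fun x : F 0 => Coalgebra.counit (R := k) (x : C))
    (oneC : C) (hone : oneC ∈ F 0) (honeCounit : Coalgebra.counit (R := k) oneC = 1)
    (f : Module.End k C)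
    (hfComul : TensorProduct.map (f : C →ₗ[k] C) (f : C →ₗ[k] C) ∘ₗ Coalgebra.comul (R := k)
      = Coalgebra.comul (R := k) ∘ₗ (f : C →ₗ[k] C))
    (hfCounit : Coalgebra.counit (R := k) ∘ₗ (f : C →ₗ[k] C) = Coalgebra.counit (R := k) (A := C))
    (hfOne : f oneC = oneC)
    (hPrim : primitives k C oneC ≤ LinearMap.ker ((1 - f : Module.End k C) : C →ₗ[k] C))
 :
    (∀ u : ℕ, 1 < u → Submodule.map (((1 - f) ^ (u - 1) : Module.End k C) : C →ₗ[k] C) (F u)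
      ≤ primitives k C oneC) ∧
    (∀ u : ℕ, 0 < u → Submodule.map (((1 - f) ^ u : Module.End k C) : C →ₗ[k] C) (F u) = ⊥) := by
  set g : Module.End k C := 1 - f with hg
  set T : Module.End k (C ⊗[k] C) := 1 - TensorProduct.map f f with hT
  have hF0 : ∀ x ∈ F 0, ∃ c : k, x = c • oneC := by
    intro x hx
    refine ⟨Coalgebra.counit (R := k) x, ?_⟩
    have := @hconn.1 ⟨x, hx⟩ ⟨Coalgebra.counit (R := k) x • oneC, (F 0).smul_mem _ hone⟩
      (by simp [honeCounit])
    exact congrArg Subtype.val this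
  have hdecomp := exists_comul_decomp F oneC hF0 hcomulF
  -- The counit axioms applied to a coproduct of the shape `a ⊗ 1 + 1 ⊗ b`.
  have hcounit : ∀ {x a b : C},
      Coalgebra.comul (R := k) x = a ⊗ₜ[k] oneC + oneC ⊗ₜ[k] b →
      x = Coalgebra.counit (R := k) a • oneC + b ∧
        x = a + Coalgebra.counit (R := k) b • oneC := by
    intro x a b h
    have h1 := Coalgebra.rTensor_counit_comul (R := k) x
    have h2 := Coalgebra.lTensor_counit_comul (R := k) x
    rw [h] at h1 h2
    constructor
    · have := congrArg (TensorProduct.lid k C) h1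
      simpa [honeCounit] using this.symm
    · have := congrArg (TensorProduct.rid k C) h2
      simpa [honeCounit] using this.symm
  have hcomulOne : Coalgebra.comul (R := k) oneC = oneC ⊗ₜ[k] oneC := by
    obtain ⟨a, b, r, hr, h⟩ := hdecomp 0 ⊥ (fun i _ hi => absurd hi (by omega)) oneC hone
    rw [(Submodule.mem_bot k).1 hr, add_zero] at h
    obtain ⟨h1, h2⟩ := hcounit h
    have h3 := congrArg (Coalgebra.counit (R := k)) h1
    simp only [map_add, map_smul, honeCounit, smul_eq_mul, mul_one] at h3
    have ha : a = oneC - Coalgebra.counit (R := k) b • oneC := eq_sub_of_add_eq h2.symm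
    have hb : b = oneC - Coalgebra.counit (R := k) a • oneC := eq_sub_of_add_eq' h1.symm
    have hab : Coalgebra.counit (R := k) b = 1 - Coalgebra.counit (R := k) a :=
      eq_sub_of_add_eq' h3.symm
    generalize Coalgebra.counit (R := k) a = α at *
    generalize Coalgebra.counit (R := k) b = β at *
    rw [h, ha, hb, hab]
    simp only [TensorProduct.sub_tmul, TensorProduct.tmul_sub, sub_smul, one_smul,
      ← TensorProduct.smul_tmul', TensorProduct.tmul_smul]
    abel
  have hgOne : g oneC = 0 := by simp [hg, hfOne]
  have hεg : ∀ x, Coalgebra.counit (R := k) (g x) = 0 := by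
    intro x
    have := LinearMap.congr_fun hfCounit x
    simp only [LinearMap.comp_apply] at this
    simp [hg, this]
  have hΔg : ∀ n x, Coalgebra.comul (R := k) ((g ^ n) x) =
      (T ^ n) (Coalgebra.comul (R := k) x) := by
    intro n
    induction n with
    | zero => simp
    | succ n ih =>
      intro x
      have := LinearMap.congr_fun hfComul x
      simp only [LinearMap.comp_apply] at this
      rw [pow_succ, Module.End.mul_apply, ih, pow_succ, Module.End.mul_apply]
      simp [hg, hT, this]
  have hTl : ∀ n a, (T ^ n) (a ⊗ₜ[k] oneC) = (g ^ n) a ⊗ₜ[k] oneC := by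
    intro n
    induction n with
    | zero => simp
    | succ n ih =>
      intro a
      rw [pow_succ, Module.End.mul_apply, pow_succ, Module.End.mul_apply, ← ih]
      simp [hg, hT, hfOne, TensorProduct.sub_tmul]
  have hTr : ∀ n b, (T ^ n) (oneC ⊗ₜ[k] b) = oneC ⊗ₜ[k] (g ^ n) b := by
    intro n
    induction n with
    | zero => simp
    | succ n ih =>
      intro b
      rw [pow_succ, Module.End.mul_apply, pow_succ, Module.End.mul_apply, ← ih]
      simp [hg, hT, hfOne, TensorProduct.tmul_sub]
  have hstep : ∀ u : ℕ, 1 < u → (∀ j, 0 < j → j < u → ∀ x ∈ F j, (g ^ j) x = 0) →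
      ∀ x ∈ F u, (g ^ (u - 1)) x ∈ primitives k C oneC := by
    intro u hu ih x hx
    obtain ⟨a, b, r, hr, h⟩ := hdecomp u (LinearMap.ker (T ^ (u - 1))) (by
      intro i hi hiu
      refine tmulImage_le fun p hp q hq => ?_
      exact one_sub_map_pow_tmul_eq_zero f (i := i) (j := u - i) (by omega)
        (ih i hi hiu p hp) (ih (u - i) (by omega) (by omega) q hq)) x hx
    have hΔ := hΔg (u - 1) x
    rw [h, map_add, map_add, hTl, hTr, LinearMap.mem_ker.1 hr, add_zero] at hΔ
    have hε : ∀ y, Coalgebra.counit (R := k) ((g ^ (u - 1)) y) = 0 := by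
      intro y
      obtain ⟨m, hm⟩ : ∃ m, u - 1 = m + 1 := ⟨u - 2, by omega⟩
      rw [hm, pow_succ', Module.End.mul_apply, hεg]
    obtain ⟨h1, h2⟩ := hcounit hΔ
    rw [hε, zero_smul, zero_add] at h1
    rw [hε, zero_smul, add_zero] at h2
    rw [mem_primitives_iff, hΔ, ← h1, ← h2]
  have hone' : ∀ x ∈ F 1, g x = 0 := by
    intro x hx
    obtain ⟨a, b, r, hr, h⟩ := hdecomp 1 ⊥ (fun i _ hi => absurd hi (by omega)) x hx
    rw [(Submodule.mem_bot k).1 hr, add_zero] at h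
    obtain ⟨h1, h2⟩ := hcounit h
    have h3 := congrArg (Coalgebra.counit (R := k)) h1
    simp only [map_add, map_smul, honeCounit, smul_eq_mul, mul_one] at h3
    have hprim : x - Coalgebra.counit (R := k) x • oneC ∈ primitives k C oneC := by
      have ha : a = x - Coalgebra.counit (R := k) b • oneC := eq_sub_of_add_eq h2.symm
      have hb : b = x - Coalgebra.counit (R := k) a • oneC := eq_sub_of_add_eq' h1.symm
      rw [mem_primitives_iff, map_sub, map_smul, hcomulOne, h, h3]
      generalize Coalgebra.counit (R := k) a = α at *
      generalize Coalgebra.counit (R := k) b = β at *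
      rw [ha, hb]
      simp only [TensorProduct.sub_tmul, TensorProduct.tmul_sub, add_smul,
        TensorProduct.add_tmul, TensorProduct.tmul_add,
        ← TensorProduct.smul_tmul', TensorProduct.tmul_smul]
      abel
    have h4 : g (x - Coalgebra.counit (R := k) x • oneC) = 0 := hPrim hprim
    rwa [map_sub, map_smul, hgOne, smul_zero, sub_zero] at h4
  have hb : ∀ u : ℕ, 0 < u → ∀ x ∈ F u, (g ^ u) x = 0 := by
    intro u
    induction u using Nat.strong_induction_on with
    | _ u ih =>
      intro hu x hx
      rcases Nat.lt_or_ge 1 u with h | h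
      · have h1 : g ((g ^ (u - 1)) x) = 0 := hPrim (hstep u h (fun j hj hju => ih j hju hj) x hx)
        rwa [← Module.End.mul_apply, ← pow_succ', Nat.sub_add_cancel hu] at h1
      · obtain rfl : u = 1 := by omega
        rw [pow_one]
        exact hone' x hx
  refine ⟨fun u hu => ?_, fun u hu => ?_⟩
  · rintro _ ⟨x, hx, rfl⟩
    exact hstep u hu (fun j hj _ => hb j hj) x hx
  · rw [eq_bot_iff]
    rintro _ ⟨x, hx, rfl⟩
    exact (Submodule.mem_bot k).2 (hb u hu x hx)
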